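/- arXiv:2307.00966 — 2 statements merged into one kernel-verified Lean document; each statement's English description precedes it below -/
import Mathlib

section
/- For every integer N ≥ 1, the matrix 9·(M²)^N has entry 1 + (−2)^{N+2} + 2^{2N+2} at every position ((μ,ν),(μ',ν')) with μ = μ' and ν = ν'; entry 1 + (−2)^N − 2^{2N+1} at every position where exactly one of μ = μ', ν = ν' holds; and entry 1 + (−2)^{N+1} + 2^{2N} at every position where μ ≠ μ' and ν ≠ ν'. -/
/-!
The matrix `M2` is the Kronecker square of the single-qubit matrix `E = eps = 2 • 1 - J`, with `J`
the all-ones matrix, so the entries of `M2 ^ N` are products of two entries of `E ^ N`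
(`M2_pow_apply`). Since `J ^ 2 = 3 J`, the matrix `E` has eigenvalue `-1` on the constant vectors
and `2` on their orthogonal complement, whence `3 E ^ N = 3 * 2 ^ N + ((-1) ^ N - 2 ^ N) J`
(`three_mul_eps_pow_apply`). Expanding the product of two such entries gives the three cases.
-/

open Matrix

/-- ε(a,b) = 1 if a = b, −1 otherwise, for Pauli labels in {x,y,z} ≅ Fin 3. -/
def eps (a b : Fin 3) : ℤ := if a = b then 1 else -1

/-- M², the sign matrix when gates are applied to both qubits:
entry at ((μ,ν),(μ',ν')) is ε(μ,μ')·ε(ν,ν'). -/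
def M2 : Matrix (Fin 3 × Fin 3) (Fin 3 × Fin 3) ℤ :=
  fun p q => eps p.1 q.1 * eps p.2 q.2

/-- M^{1.1}, a gate applied only to the first qubit: entry ε(μ,μ'). -/
def M11 : Matrix (Fin 3 × Fin 3) (Fin 3 × Fin 3) ℤ :=
  fun p q => eps p.1 q.1

/-- M^{1.2}, a gate applied only to the second qubit: entry ε(ν,ν'). -/
def M12 : Matrix (Fin 3 × Fin 3) (Fin 3 × Fin 3) ℤ :=
  fun p q => eps p.2 q.2

/-- M⁰, no gate applied: all entries 1. -/
def M0 : Matrix (Fin 3 × Fin 3) (Fin 3 × Fin 3) ℤ :=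
  fun _ _ => 1

/-- The powers of `M2` factor because `M2` is the Kronecker product of `eps` with itself. -/
theorem M2_pow_apply (N : ℕ) (p q : Fin 3 × Fin 3) :
    (M2 ^ N) p q = ((Matrix.of eps) ^ N) p.1 q.1 * ((Matrix.of eps) ^ N) p.2 q.2 := by
  induction N generalizing q with
  | zero =>
    simp only [pow_zero, Matrix.one_apply, Prod.ext_iff]
    split_ifs <;> simp_all
  | succ n ih =>
    simp only [pow_succ, Matrix.mul_apply, ih, Fintype.sum_prod_type, M2, Matrix.of_apply,
      Finset.sum_mul_sum]
    exact Finset.sum_congr rfl fun _ _ => Finset.sum_congr rfl fun _ _ => by ring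

/-- The spectral formula for the powers of the single-qubit matrix. -/
theorem three_mul_eps_pow_apply (N : ℕ) (a b : Fin 3) :
    3 * ((Matrix.of eps) ^ N) a b =
      (if a = b then 3 * 2 ^ N else 0) + ((-1 : ℤ) ^ N - 2 ^ N) := by
  induction N generalizing b with
  | zero => simp [Matrix.one_apply]
  | succ n ih =>
    rw [pow_succ, Matrix.mul_apply, Finset.mul_sum]
    simp only [← mul_assoc, ih, Fin.sum_univ_three, Matrix.of_apply, eps]
    fin_cases a <;> fin_cases b <;> simp <;> ring

/-- Entries of 9·(M²)^N, for N ≥ 1: 1 + (−2)^{N+2} + 2^{2N+2} on the diagonal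
(μ = μ' and ν = ν'), 1 + (−2)^N − 2^{2N+1} when exactly one of μ = μ', ν = ν' holds,
and 1 + (−2)^{N+1} + 2^{2N} when μ ≠ μ' and ν ≠ ν'. -/
theorem entries_of_M2_pow (N : ℕ) (hN : 1 ≤ N) (p q : Fin 3 × Fin 3) :
    ((9 : ℤ) • (M2 ^ N)) p q =
      if p.1 = q.1 ∧ p.2 = q.2 then 1 + (-2 : ℤ) ^ (N + 2) + 2 ^ (2 * N + 2)
      else if p.1 = q.1 ∨ p.2 = q.2 then 1 + (-2 : ℤ) ^ N - 2 ^ (2 * N + 1)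
      else 1 + (-2 : ℤ) ^ (N + 1) + 2 ^ (2 * N) := by
  have h1 := three_mul_eps_pow_apply N p.1 q.1
  have h2 := three_mul_eps_pow_apply N p.2 q.2
  have h : ((9 : ℤ) • (M2 ^ N)) p q =
      (3 * ((Matrix.of eps) ^ N) p.1 q.1) * (3 * ((Matrix.of eps) ^ N) p.2 q.2) := by
    rw [Matrix.smul_apply, M2_pow_apply, smul_eq_mul]
    ring
  have hsq : ((-1 : ℤ) ^ N) * (-1) ^ N = 1 := by rw [← mul_pow]; norm_num
  have hneg : (-2 : ℤ) ^ N = (-1) ^ N * 2 ^ N := by rw [← mul_pow]; norm_num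
  have htwo : (2 : ℤ) ^ (2 * N) = 2 ^ N * 2 ^ N := by rw [two_mul, pow_add]
  rw [h, h1, h2]
  simp only [pow_add, hneg, htwo]
  -- Each case is a polynomial identity in `2 ^ N` and `(-1) ^ N` modulo `hsq`.
  by_cases ha : p.1 = q.1 <;> by_cases hb : p.2 = q.2 <;>
    simp only [ha, hb, and_true, and_false, or_true, or_false, if_true, if_false] <;>
    linear_combination hsq
end

section
/- For all integers N ≥ 1 and 1 ≤ k ≤ N, the matrix B_k = (M²)^{N−k}·(M^{1.1})^k + (M²)^{N−k}·(M^{1.2})^k satisfies: 9·B_k has entry 2·(−3)^k·(1 + (−1)^N·2^{N+1}) at every position ((μ,ν),(μ',ν')) with μ = μ' and ν = ν'; entry (−3)^k·(2 + (−2)^N) at every position where exactly one of μ = μ', ν = ν' holds; and entry (−2)·(−3)^k·(−1 + (−2)^N) at every position where μ ≠ μ' and ν ≠ ν'. -/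
/-! Write `E` for the `3 × 3` matrix of `eps` and `J` for the `3 × 3` all-ones matrix, so that
`E = 2I - J`, `M2 = E ⊗ E`, `M11 = E ⊗ J` and `M12 = J ⊗ E`. The span of `D = I ⊗ J` and
`M0 = J ⊗ J` contains `M11` and is stable under left multiplication by `M2` and right
multiplication by `M11`. On this span both operators are triangular, so the closed form of
`9 • (M2 ^ m * M11 ^ k)` follows by induction on the exponents. The same relations hold for `M12`
with `D = J ⊗ I`, hence the argument is carried out once, from the relations alone, in
`nine_smul_pow_mul_pow`; the entries are then read off. -/

open Matrix

/-- The matrix `I ⊗ J`, with entry `1` exactly where the first labels agree. -/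
def sameFst : Matrix (Fin 3 × Fin 3) (Fin 3 × Fin 3) ℤ :=
  fun p q => if p.1 = q.1 then 1 else 0

/-- The matrix `J ⊗ I`, with entry `1` exactly where the second labels agree. -/
def sameSnd : Matrix (Fin 3 × Fin 3) (Fin 3 × Fin 3) ℤ :=
  fun p q => if p.2 = q.2 then 1 else 0

/-- Closed form of `A ^ m * C ^ (j + 1)` when `C` lies in the span of `D` and `J`, on which left
multiplication by `A` has eigenvalues `-2`, `1` and right multiplication by `C` has eigenvalues
`6`, `-3`. The eigenvector of both operators for the non-trivial eigenvalues is `3 • D - J`. -/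
lemma nine_smul_pow_mul_pow {R : Type*} [Ring R] {A C D J : R}
    (hC : C = (2 : ℤ) • D - J) (hDC : D * C = (6 : ℤ) • D - (3 : ℤ) • J)
    (hJC : J * C = (-3 : ℤ) • J) (hAD : A * D = J - (2 : ℤ) • D) (hAJ : A * J = J) (m j : ℕ) :
    (9 : ℤ) • (A ^ m * C ^ (j + 1)) =
      (-3 : ℤ) ^ (j + 1) • ((3 * (-2 : ℤ) ^ (m + (j + 1))) • D
        + (1 - (-2 : ℤ) ^ (m + (j + 1))) • J) := by
  induction m with
  | zero =>
    induction j with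
    | zero =>
      simp only [pow_zero, one_mul, zero_add, pow_one]
      rw [hC]
      module
    | succ j ih =>
      rw [pow_succ C, ← mul_assoc, ← smul_mul_assoc, ih]
      simp only [smul_mul_assoc, add_mul, hDC, hJC]
      module
  | succ m ih =>
    rw [pow_succ' A, mul_assoc, ← mul_smul_comm, ih]
    simp only [mul_smul_comm, mul_add, hAD, hAJ]
    module

/-- Entries of 9·B_k where B_k = (M²)^{N−k}·(M^{1.1})^k + (M²)^{N−k}·(M^{1.2})^k,
for 1 ≤ k ≤ N: 2·(−3)^k·(1 + (−1)^N·2^{N+1}) on the diagonal (μ = μ' and ν = ν'),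
(−3)^k·(2 + (−2)^N) when exactly one of μ = μ', ν = ν' holds, and
(−2)·(−3)^k·(−1 + (−2)^N) when μ ≠ μ' and ν ≠ ν'. -/
theorem entries_of_Bk (N k : ℕ) (hk : 1 ≤ k) (hkN : k ≤ N) (p q : Fin 3 × Fin 3) :
    ((9 : ℤ) • (M2 ^ (N - k) * M11 ^ k + M2 ^ (N - k) * M12 ^ k)) p q =
      if p.1 = q.1 ∧ p.2 = q.2 then
        2 * (-3 : ℤ) ^ k * (1 + (-1 : ℤ) ^ N * 2 ^ (N + 1))
      else if p.1 = q.1 ∨ p.2 = q.2 then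
        (-3 : ℤ) ^ k * (2 + (-2 : ℤ) ^ N)
      else
        (-2) * (-3 : ℤ) ^ k * (-1 + (-2 : ℤ) ^ N) := by
  obtain ⟨j, rfl⟩ : ∃ j, k = j + 1 := ⟨k - 1, by omega⟩
  obtain ⟨m, rfl⟩ : ∃ m, N = m + (j + 1) := ⟨N - (j + 1), by omega⟩
  have h1 := nine_smul_pow_mul_pow (A := M2) (C := M11) (D := sameFst) (J := M0)
    (by decide) (by decide) (by decide) (by decide) (by decide) m j
  have h2 := nine_smul_pow_mul_pow (A := M2) (C := M12) (D := sameSnd) (J := M0)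
    (by decide) (by decide) (by decide) (by decide) (by decide) m j
  have h3 : (-1 : ℤ) ^ (m + (j + 1)) * 2 ^ (m + (j + 1) + 1) = 2 * (-2) ^ (m + (j + 1)) := by
    rw [pow_succ 2, ← mul_assoc, ← mul_pow]
    norm_num [mul_comm]
  rw [Nat.add_sub_cancel, smul_add, h1, h2, h3]
  simp only [Matrix.add_apply, Matrix.smul_apply, smul_eq_mul, sameFst, sameSnd, M0]
  by_cases ha : p.1 = q.1 <;> by_cases hb : p.2 = q.2 <;> simp only [ha, hb] <;> simp <;> ring
end
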